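/- arXiv:2406.12290 — 2 statements merged into one kernel-verified Lean document; each statement's English description precedes it below -/
import Mathlib

section
/- For every 0 < ε < 1, there exists a measurable set T ⊆ [0,1)² with Lebesgue measure μ(T) ≥ 7/24 - ε and a measurable function f : T → [0, 100/ε²] such that for any x, y, z ∈ T with x + z ≡ 2y (mod 1) coordinatewise, f(x) + f(z) ≥ 2f(y) + (x₁-z₁)² + (x₂-z₂)². -/
open Set MeasureTheory

/-- The lower part of the set: a polygon in the strip `0 ≤ s < 1/2`. -/
def lowerRegion : Set (ℝ × ℝ) :=
  regionBetween (fun _ => 0) (fun s => min (1/2) (s + 1/6)) (Ico 0 (1/2))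

/-- One of the two translated copies of the upper part, over the strip `1/2 ≤ s < 3/4`. -/
def upperRegion (c : ℝ) : Set (ℝ × ℝ) :=
  regionBetween (fun s => max (1/4) (s - 1/3) + c) (fun _ => 1/2 + c) (Ico (1/2) (3/4))

lemma measurableSet_lowerRegion : MeasurableSet lowerRegion :=
  measurableSet_regionBetween (by fun_prop) (by fun_prop) measurableSet_Ico

lemma measurableSet_upperRegion (c : ℝ) : MeasurableSet (upperRegion c) :=
  measurableSet_regionBetween (by fun_prop) (by fun_prop) measurableSet_Ico

lemma integral_min_half_add_sixth : ∫ s in (0:ℝ)..(1/2), min (1/2) (s + 1/6) = 7/36 := by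
  have hc : Continuous fun s : ℝ => min (1/2 : ℝ) (s + 1/6) := by fun_prop
  rw [← intervalIntegral.integral_add_adjacent_intervals (hc.intervalIntegrable 0 (1/3))
    (hc.intervalIntegrable (1/3) (1/2))]
  have h1 : ∫ s in (0:ℝ)..(1/3), min (1/2) (s + 1/6) = ∫ s in (0:ℝ)..(1/3), (s + 1/6) := by
    refine intervalIntegral.integral_congr fun s hs => ?_
    rw [uIcc_of_le (by norm_num)] at hs
    exact min_eq_right (by linarith [hs.2])
  have h2 : ∫ s in (1/3:ℝ)..(1/2), min (1/2) (s + 1/6) = ∫ s in (1/3:ℝ)..(1/2), (1/2 : ℝ) := by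
    refine intervalIntegral.integral_congr fun s hs => ?_
    rw [uIcc_of_le (by norm_num)] at hs
    exact min_eq_left (by linarith [hs.1])
  rw [h1, h2, intervalIntegral.integral_add (by simp) (by simp)]
  norm_num

lemma integral_half_sub_max_quarter :
    ∫ s in (1/2:ℝ)..(3/4), (1/2 - max (1/4) (s - 1/3)) = 7/144 := by
  have hc : Continuous fun s : ℝ => 1/2 - max (1/4 : ℝ) (s - 1/3) := by fun_prop
  rw [← intervalIntegral.integral_add_adjacent_intervals (hc.intervalIntegrable (1/2) (7/12))
    (hc.intervalIntegrable (7/12) (3/4))]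
  have h1 : ∫ s in (1/2:ℝ)..(7/12), (1/2 - max (1/4) (s - 1/3))
      = ∫ s in (1/2:ℝ)..(7/12), (1/4 : ℝ) := by
    refine intervalIntegral.integral_congr fun s hs => ?_
    rw [uIcc_of_le (by norm_num)] at hs
    have := max_eq_left (show s - 1/3 ≤ 1/4 by linarith [hs.2])
    simp only [this]
    norm_num
  have h2 : ∫ s in (7/12:ℝ)..(3/4), (1/2 - max (1/4) (s - 1/3))
      = ∫ s in (7/12:ℝ)..(3/4), (5/6 - s) := by
    refine intervalIntegral.integral_congr fun s hs => ?_
    rw [uIcc_of_le (by norm_num)] at hs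
    have := max_eq_right (show 1/4 ≤ s - 1/3 by linarith [hs.1])
    simp only [this]
    ring
  rw [h1, h2, intervalIntegral.integral_sub (by simp) (by simp)]
  norm_num

lemma volume_lowerRegion : volume lowerRegion = ENNReal.ofReal (7/36) := by
  have hc : Continuous fun s : ℝ => min (1/2 : ℝ) (s + 1/6) := by fun_prop
  rw [lowerRegion, Measure.volume_eq_prod, volume_regionBetween_eq_integral
    (integrableOn_const (by simp)) (hc.integrableOn_Icc.mono_set Ico_subset_Icc_self)
    measurableSet_Ico, ← integral_min_half_add_sixth,
    intervalIntegral.integral_of_le (by norm_num), integral_Ico_eq_integral_Ioc]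
  · simp
  · intro s hs
    exact le_min (by norm_num) (by linarith [hs.1])

lemma volume_upperRegion (c : ℝ) : volume (upperRegion c) = ENNReal.ofReal (7/144) := by
  have hc : Continuous fun s : ℝ => max (1/4 : ℝ) (s - 1/3) + c := by fun_prop
  rw [upperRegion, Measure.volume_eq_prod, volume_regionBetween_eq_integral
    (hc.integrableOn_Icc.mono_set Ico_subset_Icc_self) (integrableOn_const (by simp))
    measurableSet_Ico, ← integral_half_sub_max_quarter,
    intervalIntegral.integral_of_le (by norm_num), integral_Ico_eq_integral_Ioc]
  · simp
  · intro s hs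
    exact add_le_add_left (max_le (by norm_num) (by linarith [hs.2])) c

lemma mem_lowerRegion {x : ℝ × ℝ} (hx : x ∈ lowerRegion) :
    0 ≤ x.1 ∧ x.1 < 1/2 ∧ 0 < x.2 ∧ x.2 < 1/2 ∧ x.2 < x.1 + 1/6 :=
  ⟨hx.1.1, hx.1.2, hx.2.1, lt_min_iff.1 hx.2.2⟩

lemma mem_upperRegion {c : ℝ} {x : ℝ × ℝ} (hx : x ∈ upperRegion c) :
    1/2 ≤ x.1 ∧ x.1 < 3/4 ∧ 1/4 + c < x.2 ∧ x.1 - 1/3 + c < x.2 ∧ x.2 < 1/2 + c := by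
  obtain ⟨⟨h1, h2⟩, h3, h4⟩ := hx
  refine ⟨h1, h2, ?_, ?_, h4⟩
  · exact (add_le_add_left (le_max_left _ _) c).trans_lt h3
  · exact (add_le_add_left (le_max_right _ _) c).trans_lt h3

/-- The union of the lower region and both copies of the upper region. -/
def fullRegion : Set (ℝ × ℝ) := lowerRegion ∪ (upperRegion 0 ∪ upperRegion (1/2))

lemma measurableSet_fullRegion : MeasurableSet fullRegion :=
  measurableSet_lowerRegion.union
    ((measurableSet_upperRegion 0).union (measurableSet_upperRegion (1/2)))

lemma volume_fullRegion : volume fullRegion = ENNReal.ofReal (7/24) := by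
  have h1 : Disjoint (upperRegion 0) (upperRegion (1/2)) :=
    disjoint_left.2 fun x hx hx' => by
      have := mem_upperRegion hx
      have := mem_upperRegion hx'
      linarith
  have h2 : Disjoint lowerRegion (upperRegion 0 ∪ upperRegion (1/2)) :=
    disjoint_left.2 fun x hx hx' => by
      have := mem_lowerRegion hx
      rcases hx' with hx' | hx' <;> have := mem_upperRegion hx' <;> linarith
  rw [fullRegion, measure_union h2 ((measurableSet_upperRegion 0).union
    (measurableSet_upperRegion (1/2))), measure_union h1 (measurableSet_upperRegion (1/2)),
    volume_lowerRegion, volume_upperRegion, volume_upperRegion,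
    ← ENNReal.ofReal_add (by norm_num) (by norm_num),
    ← ENNReal.ofReal_add (by norm_num) (by norm_num)]
  norm_num

/-- A point of the lower part, at distance at least `ε` from the upper part. -/
def IsLower (ε : ℝ) (x : ℝ × ℝ) : Prop :=
  0 ≤ x.1 ∧ x.1 < 1/2 - ε ∧ 0 < x.2 ∧ x.2 < 1/2 ∧ x.2 < x.1 + 1/6

/-- A point of the upper part whose second coordinate is `p + i / 2` with `p < 1/2`. -/
def IsUpper (x : ℝ × ℝ) (p : ℝ) (i : ℤ) : Prop :=
  1/2 ≤ x.1 ∧ x.1 < 3/4 ∧ 1/4 < p ∧ x.1 - 1/3 < p ∧ p < 1/2 ∧ x.2 = p + i / 2 ∧ (i = 0 ∨ i = 1)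

/-- Reduction of `[0, 1)` modulo `1/2`. -/
noncomputable def modHalf (v : ℝ) : ℝ := if v < 1/2 then v else v - 1/2

/-- The weight function: strictly convex on each part, and steep in the upper part. -/
noncomputable def weight (ε : ℝ) (x : ℝ × ℝ) : ℝ :=
  2 * (x.1^2 + modHalf x.2 ^ 2) + if x.1 < 1/2 then 0 else 4 + 10/ε * (x.1 - 1/2)

lemma measurable_weight (ε : ℝ) : Measurable (weight ε) := by
  have h : Measurable modHalf :=
    Measurable.ite (measurableSet_lt measurable_id measurable_const) measurable_id
      (measurable_id.sub_const _)
  have h' : Measurable fun x : ℝ × ℝ => if x.1 < 1/2 then (0 : ℝ) else 4 + 10/ε * (x.1 - 1/2) :=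
    Measurable.ite (measurableSet_lt measurable_fst measurable_const) measurable_const
      (by fun_prop)
  unfold weight
  fun_prop

lemma IsLower.weight_eq {ε : ℝ} (hε : 0 < ε) {x : ℝ × ℝ} (h : IsLower ε x) :
    weight ε x = 2 * (x.1^2 + x.2^2) := by
  rw [weight, modHalf, if_pos h.2.2.2.1, if_pos (by linarith [h.2.1]), add_zero]

lemma IsUpper.weight_eq {ε : ℝ} {x : ℝ × ℝ} {p : ℝ} {i : ℤ} (h : IsUpper x p i) :
    weight ε x = 2 * (x.1^2 + p^2) + (4 + 10/ε * (x.1 - 1/2)) := by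
  obtain ⟨h1, -, h3, -, h5, h6, rfl | rfl⟩ := h
  · rw [weight, modHalf, if_pos (by rw [h6]; simpa using h5), if_neg (by linarith), h6]
    simp
  · rw [weight, modHalf, if_neg (by rw [h6]; push_cast; linarith), if_neg (by linarith), h6]
    simp

lemma isLower_or_isUpper {ε : ℝ} {x : ℝ × ℝ}
    (hx : x ∈ fullRegion \ Ico (1/2 - ε) (1/2) ×ˢ Ico (0:ℝ) 1) :
    IsLower ε x ∨ ∃ p i, IsUpper x p i := by
  obtain ⟨hx | hx | hx, hn⟩ := hx
  · obtain ⟨h1, h2, h3, h4, h5⟩ := mem_lowerRegion hx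
    refine Or.inl ⟨h1, ?_, h3, h4, h5⟩
    by_contra! h
    exact hn ⟨⟨h, h2⟩, h3.le, by linarith⟩
  · obtain ⟨h1, h2, h3, h4, h5⟩ := mem_upperRegion hx
    exact Or.inr ⟨x.2, 0, h1, h2, by linarith, by linarith, by linarith, by simp, Or.inl rfl⟩
  · obtain ⟨h1, h2, h3, h4, h5⟩ := mem_upperRegion hx
    exact Or.inr ⟨x.2 - 1/2, 1, h1, h2, by linarith, by linarith, by linarith, by simp,
      Or.inr rfl⟩

lemma IsLower.weight_bounds {ε : ℝ} (hε : 0 < ε) {x : ℝ × ℝ} (h : IsLower ε x) :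
    0 ≤ weight ε x ∧ weight ε x ≤ 1 := by
  rw [h.weight_eq hε]
  obtain ⟨h1, h2, h3, h4, -⟩ := h
  constructor <;> nlinarith

lemma IsUpper.four_le_weight {ε : ℝ} (hε : 0 < ε) {x : ℝ × ℝ} {p : ℝ} {i : ℤ}
    (h : IsUpper x p i) : 4 ≤ weight ε x := by
  rw [h.weight_eq]
  have : 0 ≤ 10/ε * (x.1 - 1/2) := mul_nonneg (by positivity) (by linarith [h.1])
  nlinarith [sq_nonneg x.1, sq_nonneg p]

lemma IsUpper.weight_le {ε : ℝ} (hε : 0 < ε) (hε1 : ε < 1) {x : ℝ × ℝ} {p : ℝ} {i : ℤ}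
    (h : IsUpper x p i) : weight ε x ≤ 100/ε^2 := by
  rw [h.weight_eq]
  obtain ⟨h1, h2, h3, -, h5, -⟩ := h
  have e1 : 1 ≤ 1/ε := by rw [le_div_iff₀ hε]; linarith
  have e2 : 100/ε^2 = 100 * (1/ε)^2 := by field_simp
  have e3 : 10/ε * (x.1 - 1/2) ≤ 10 * (1/ε) * (1/4) := by
    rw [mul_one_div 10 ε]
    gcongr
    linarith
  rw [e2]
  nlinarith

lemma IsUpper.snd_bounds {x : ℝ × ℝ} {p : ℝ} {i : ℤ} (h : IsUpper x p i) :
    0 ≤ x.2 ∧ x.2 < 1 := by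
  obtain ⟨-, -, h3, -, h5, h6, rfl | rfl⟩ := h <;> rw [h6] <;> push_cast <;>
    constructor <;> linarith

lemma eq_of_sub_lt_one {k m : ℤ} (h1 : (k : ℝ) < m + 1) (h2 : (m : ℝ) < k + 1) : k = m := by
  have h1 : k < m + 1 := by exact_mod_cast h1
  have h2 : m < k + 1 := by exact_mod_cast h2
  omega

lemma two_mul_add_sq_of_midpoint {a b c : ℝ} (h : a + b = 2 * c) :
    2 * a^2 + 2 * b^2 = 4 * c^2 + (a - b)^2 := by
  obtain rfl : b = 2 * c - a := by linarith
  ring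

lemma weight_ineq_lower {ε : ℝ} (hε : 0 < ε) {x y z : ℝ × ℝ} (hx : IsLower ε x)
    (hy : IsLower ε y) (hz : IsLower ε z) {k l : ℤ} (hk : x.1 + z.1 - 2 * y.1 = k)
    (hl : x.2 + z.2 - 2 * y.2 = l) :
    weight ε x + weight ε z ≥ 2 * weight ε y + (x.1 - z.1)^2 + (x.2 - z.2)^2 := by
  rw [hx.weight_eq hε, hy.weight_eq hε, hz.weight_eq hε]
  obtain ⟨hx1, hx2, hx3, hx4, -⟩ := hx
  obtain ⟨hy1, hy2, hy3, hy4, -⟩ := hy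
  obtain ⟨hz1, hz2, hz3, hz4, -⟩ := hz
  obtain rfl : k = 0 := eq_of_sub_lt_one (by push_cast; linarith) (by push_cast; linarith)
  obtain rfl : l = 0 := eq_of_sub_lt_one (by push_cast; linarith) (by push_cast; linarith)
  push_cast at hk hl
  linarith [two_mul_add_sq_of_midpoint (show x.1 + z.1 = 2 * y.1 by linarith),
    two_mul_add_sq_of_midpoint (show x.2 + z.2 = 2 * y.2 by linarith)]

lemma weight_ineq_upper {ε : ℝ} {x y z : ℝ × ℝ} {p q r : ℝ} {i j m : ℤ} (hx : IsUpper x p i)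
    (hy : IsUpper y r m) (hz : IsUpper z q j) {k l : ℤ} (hk : x.1 + z.1 - 2 * y.1 = k)
    (hl : x.2 + z.2 - 2 * y.2 = l) :
    weight ε x + weight ε z ≥ 2 * weight ε y + (x.1 - z.1)^2 + (x.2 - z.2)^2 := by
  rw [hx.weight_eq, hy.weight_eq, hz.weight_eq]
  obtain ⟨hx1, hx2, hx3, -, hx5, hx6, hi⟩ := hx
  obtain ⟨hy1, hy2, hy3, -, hy5, hy6, hm⟩ := hy
  obtain ⟨hz1, hz2, hz3, -, hz5, hz6, hj⟩ := hz
  obtain rfl : k = 0 := eq_of_sub_lt_one (by push_cast; linarith) (by push_cast; linarith)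
  push_cast at hk
  have hs : x.1 + z.1 = 2 * y.1 := by linarith
  rw [hx6, hy6, hz6] at hl
  have hpar : 2 * l = i + j - 2 * m := by
    apply eq_of_sub_lt_one <;> push_cast <;> linarith
  have hij : i = j := by omega
  subst hij
  have hr : (2 * l : ℝ) = i + i - 2 * m := by exact_mod_cast hpar
  have hp : p + q = 2 * r := by linarith
  have hd : x.2 - z.2 = p - q := by rw [hx6, hz6]; ring
  have hlin : 10/ε * (x.1 - 1/2) + 10/ε * (z.1 - 1/2) = 2 * (10/ε * (y.1 - 1/2)) := by
    linear_combination (10/ε) * hs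
  rw [hd]
  linarith [two_mul_add_sq_of_midpoint hs, two_mul_add_sq_of_midpoint hp]

lemma not_isUpper_midpoint_of_isLower {ε : ℝ} (hε : 0 < ε) {x y z : ℝ × ℝ} {r : ℝ} {m : ℤ}
    (hx : IsLower ε x) (hy : IsUpper y r m) (hz : IsLower ε z) {k l : ℤ}
    (hk : x.1 + z.1 - 2 * y.1 = k) (hl : x.2 + z.2 - 2 * y.2 = l) : False := by
  obtain ⟨hx1, hx2, hx3, hx4, hx5⟩ := hx
  obtain ⟨hy1, hy2, hy3, hy4, hy5, hy6, -⟩ := hy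
  obtain ⟨hz1, hz2, hz3, hz4, hz5⟩ := hz
  obtain rfl : k = -1 := by
    have h1 : (k : ℝ) < 0 := by linarith
    have h2 : (-2 : ℝ) < k := by linarith
    have h1 : k < 0 := by exact_mod_cast h1
    have h2 : -2 < k := by exact_mod_cast h2
    omega
  rw [hy6] at hl
  have hlm : l = -m := by
    apply eq_of_sub_lt_one <;> push_cast <;> linarith
  rw [hlm] at hl
  push_cast at hk hl
  linarith

lemma weight_ineq_upper_upper_lower {ε : ℝ} (hε : 0 < ε) {x y z : ℝ × ℝ} {p r : ℝ} {i m : ℤ}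
    (hx : IsUpper x p i) (hy : IsUpper y r m) (hz : IsLower ε z) {k : ℤ}
    (hk : x.1 + z.1 - 2 * y.1 = k) :
    weight ε x + weight ε z ≥ 2 * weight ε y + (x.1 - z.1)^2 + (x.2 - z.2)^2 := by
  have hxs := hx.snd_bounds
  rw [hx.weight_eq, hy.weight_eq, hz.weight_eq hε]
  obtain ⟨hx1, hx2, hx3, -, hx5, -⟩ := hx
  obtain ⟨hy1, hy2, hy3, -, hy5, -⟩ := hy
  obtain ⟨hz1, hz2, hz3, hz4, -⟩ := hz
  obtain rfl : k = 0 := eq_of_sub_lt_one (by push_cast; linarith) (by push_cast; linarith)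
  push_cast at hk
  have hgap : 10 ≤ 10/ε * (x.1 - 1/2) - 2 * (10/ε * (y.1 - 1/2)) :=
    calc (10 : ℝ) = 10/ε * ε := by field_simp
      _ ≤ 10/ε * (1/2 - z.1) := by gcongr; linarith
      _ = _ := by linear_combination (10/ε) * (-hk)
  have h1 : (x.1 - z.1)^2 ≤ 1 := by nlinarith
  have h2 : (x.2 - z.2)^2 ≤ 1 := by nlinarith
  have h3 : y.1^2 ≤ 9/16 := by nlinarith
  have h4 : r^2 ≤ 1/4 := by nlinarith
  linarith [sq_nonneg x.1, sq_nonneg p, sq_nonneg z.1, sq_nonneg z.2]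

theorem stmt_17 (ε : ℝ) (hε : 0 < ε) (hε1 : ε < 1) :
    ∃ (T : Set (ℝ × ℝ)) (f : ℝ × ℝ → ℝ),
      T ⊆ Ico (0:ℝ) 1 ×ˢ Ico (0:ℝ) 1 ∧ MeasurableSet T ∧
      ENNReal.ofReal (7/24 - ε) ≤ volume T ∧
      Measurable f ∧ (∀ x ∈ T, f x ∈ Icc (0:ℝ) (100/ε^2)) ∧
      ∀ x ∈ T, ∀ y ∈ T, ∀ z ∈ T,
        (∃ k : ℤ, x.1 + z.1 - 2 * y.1 = k) → (∃ k : ℤ, x.2 + z.2 - 2 * y.2 = k) →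
        f x + f z ≥ 2 * f y + (x.1 - z.1)^2 + (x.2 - z.2)^2 := by
  have hunit : ∀ x ∈ fullRegion \ Ico (1/2 - ε) (1/2) ×ˢ Ico (0:ℝ) 1,
      x ∈ Ico (0:ℝ) 1 ×ˢ Ico (0:ℝ) 1 := fun x hx => by
    rcases isLower_or_isUpper hx with ⟨h1, h2, h3, h4, -⟩ | ⟨p, i, h⟩
    · exact ⟨⟨h1, by linarith⟩, h3.le, by linarith⟩
    · exact ⟨⟨by linarith [h.1], by linarith [h.2.1]⟩, h.snd_bounds⟩
  refine ⟨fullRegion \ Ico (1/2 - ε) (1/2) ×ˢ Ico (0:ℝ) 1, weight ε, hunit,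
    measurableSet_fullRegion.diff (measurableSet_Ico.prod measurableSet_Ico), ?_,
    measurable_weight ε, fun x hx => ?_, fun x hx y hy z hz ⟨k, hk⟩ ⟨l, hl⟩ => ?_⟩
  · refine le_trans (le_of_eq ?_) (le_measure_sdiff (μ := volume))
    rw [volume_fullRegion, Measure.volume_eq_prod, Measure.prod_prod, Real.volume_Ico,
      Real.volume_Ico, ENNReal.ofReal_sub _ hε.le]
    simp
  · rcases isLower_or_isUpper hx with h | ⟨p, i, h⟩
    · refine ⟨(h.weight_bounds hε).1, (h.weight_bounds hε).2.trans ?_⟩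
      rw [le_div_iff₀ (by positivity)]
      nlinarith
    · exact ⟨by linarith [h.four_le_weight hε], h.weight_le hε hε1⟩
  · have hnonneg : ∀ w ∈ fullRegion \ Ico (1/2 - ε) (1/2) ×ˢ Ico (0:ℝ) 1, 0 ≤ weight ε w := by
      intro w hw
      rcases isLower_or_isUpper hw with h | ⟨p, i, h⟩
      · exact (h.weight_bounds hε).1
      · linarith [h.four_le_weight hε]
    obtain ⟨⟨hx1, hx2⟩, hx3, hx4⟩ := hunit x hx
    obtain ⟨⟨hz1, hz2⟩, hz3, hz4⟩ := hunit z hz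
    have h1 : (x.1 - z.1)^2 ≤ 1 := by nlinarith
    have h2 : (x.2 - z.2)^2 ≤ 1 := by nlinarith
    have hx0 := hnonneg x hx
    have hz0 := hnonneg z hz
    rcases isLower_or_isUpper hy with hy | ⟨r, m, hy⟩
    · have hy' := (hy.weight_bounds hε).2
      rcases isLower_or_isUpper hx with hx | ⟨p, i, hx⟩
      · rcases isLower_or_isUpper hz with hz | ⟨q, j, hz⟩
        · exact weight_ineq_lower hε hx hy hz hk hl
        · linarith [hz.four_le_weight hε]
      · linarith [hx.four_le_weight hε]
    · rcases isLower_or_isUpper hx with hx | ⟨p, i, hx⟩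
      · rcases isLower_or_isUpper hz with hz | ⟨q, j, hz⟩
        · exact (not_isUpper_midpoint_of_isLower hε hx hy hz hk hl).elim
        · have := weight_ineq_upper_upper_lower hε hz hy hx (k := k) (by linarith)
          linarith [sub_sq_comm x.1 z.1, sub_sq_comm x.2 z.2]
      · rcases isLower_or_isUpper hz with hz | ⟨q, j, hz⟩
        · exact weight_ineq_upper_upper_lower hε hx hy hz hk
        · exact weight_ineq_upper hx hy hz hk hl
end

section
/- For any 0 < δ < 1 and any even positive integer n, there exists a measurable set S ⊆ [0,1)ⁿ with Lebesgue measure μ(S) ≥ 10⁻⁵ δ² n⁻³ (7/24)^(n/2) such that for any x, y, z ∈ S with x + z ≡ 2y (mod 1) coordinatewise, we have |xᵢ - zᵢ| < δ for all i = 1, …, n. -/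
open Set MeasureTheory

def lowPart : Set (ℝ × ℝ) :=
  {q | 0 ≤ q.1 ∧ 240 * q.1 < 119 ∧ 0 ≤ 2 * q.2 - q.1 ∧ 2 * q.2 - q.1 < 1 ∧ 3 ≤ 6 * q.1 + 8 * q.2}

def highPart : Set (ℝ × ℝ) :=
  {q | 1 ≤ 2 * q.1 ∧ 1 ≤ 2 * (2 * q.2 - q.1) ∧ 2 * q.2 - q.1 < 1 ∧ 6 * q.1 + 8 * q.2 < 10}

def shiftedHighPart : Set (ℝ × ℝ) :=
  {q | 1 ≤ 2 * q.1 ∧ -1 ≤ 2 * (2 * q.2 - q.1) ∧ 2 * q.2 - q.1 < 0 ∧ 6 * q.1 + 8 * q.2 < 6}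

/-- A function on `block` that is strictly midpoint convex along progressions mod 1, see
`height_gain`. -/
noncomputable def height (q : ℝ × ℝ) : ℝ :=
  if 2 * q.1 < 1 then q.1 ^ 2 + q.2 ^ 2
  else if 0 ≤ 2 * q.2 - q.1 then 2400 * (2 * q.1 - 239 / 240) + q.1 ^ 2 + q.2 ^ 2
  else 2400 * (2 * q.1 - 239 / 240) + q.1 ^ 2 + (q.2 + 1 / 2) ^ 2

/-- A subset of the unit square of area `7 / 24`. -/
def block : Set (ℝ × ℝ) := lowPart ∪ highPart ∪ shiftedHighPart

lemma cases_block {q : ℝ × ℝ} (h : q ∈ block) :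
    (q ∈ lowPart ∧ height q = q.1 ^ 2 + q.2 ^ 2) ∨
    (q ∈ highPart ∧ height q = 2400 * (2 * q.1 - 239 / 240) + q.1 ^ 2 + q.2 ^ 2) ∨
    (q ∈ shiftedHighPart ∧
      height q = 2400 * (2 * q.1 - 239 / 240) + q.1 ^ 2 + (q.2 + 1 / 2) ^ 2) := by
  rcases h with (h | h) | h
  · refine Or.inl ⟨h, ?_⟩
    obtain ⟨h1, h2, h3, h4, h5⟩ := h
    rw [height, if_pos (by linarith)]
  · refine Or.inr (Or.inl ⟨h, ?_⟩)
    obtain ⟨h1, h2, h3, h4⟩ := h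
    rw [height, if_neg (by linarith), if_pos (by linarith)]
  · refine Or.inr (Or.inr ⟨h, ?_⟩)
    obtain ⟨h1, h2, h3, h4⟩ := h
    rw [height, if_neg (by linarith), if_neg (by linarith)]

lemma block_bounds {q : ℝ × ℝ} (h : q ∈ block) : 0 ≤ q.1 ∧ q.1 < 1 ∧ 0 ≤ q.2 ∧ q.2 < 1 := by
  rcases h with (⟨h1, h2, h3, h4, h5⟩ | ⟨h1, h2, h3, h4⟩) | ⟨h1, h2, h3, h4⟩ <;>
    refine ⟨?_, ?_, ?_, ?_⟩ <;> linarith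

lemma int_cases_of_abs_lt_two {k : ℤ} (h1 : (-2 : ℝ) < k) (h2 : (k : ℝ) < 2) :
    k = -1 ∨ k = 0 ∨ k = 1 := by
  have : -2 < k := by exact_mod_cast h1
  have : k < 2 := by exact_mod_cast h2
  omega

set_option maxHeartbeats 4000000 in
theorem height_gain {x y z : ℝ × ℝ} (hx : x ∈ block) (hy : y ∈ block) (hz : z ∈ block)
    {k l : ℤ} (hk : x.1 + z.1 - 2 * y.1 = k) (hl : x.2 + z.2 - 2 * y.2 = l) :
    ((x.1 - z.1) ^ 2 + (x.2 - z.2) ^ 2) / 2 ≤ height x + height z - 2 * height y := by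
  obtain ⟨bx1, bx2, bx3, bx4⟩ := block_bounds hx
  obtain ⟨by1, by2, by3, by4⟩ := block_bounds hy
  obtain ⟨bz1, bz2, bz3, bz4⟩ := block_bounds hz
  have k3 := int_cases_of_abs_lt_two (k := k) (by linarith) (by linarith)
  have l3 := int_cases_of_abs_lt_two (k := l) (by linarith) (by linarith)
  have cx := cases_block hx
  have cy := cases_block hy
  have cz := cases_block hz
  clear hx hy hz
  obtain ⟨x, x'⟩ := x
  obtain ⟨y, y'⟩ := y
  obtain ⟨z, z'⟩ := z
  simp only at *
  have sx : x ^ 2 ≤ 1 := by nlinarith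
  have sx' : x' ^ 2 ≤ 1 := by nlinarith
  have sy : y ^ 2 ≤ 1 := by nlinarith
  have sy' : y' ^ 2 ≤ 1 := by nlinarith
  have sz : z ^ 2 ≤ 1 := by nlinarith
  have sz' : z' ^ 2 ≤ 1 := by nlinarith
  have d : (x - z) ^ 2 ≤ 1 := by nlinarith
  have d' : (x' - z') ^ 2 ≤ 1 := by nlinarith
  have sys : (y' + 1 / 2) ^ 2 ≤ 9 / 4 := by nlinarith
  have e1 : (x + z - 2 * y) * (x + z + 2 * y) = k * (x + z + 2 * y) := by rw [hk]
  have e2 : (x' + z' - 2 * y') * (x' + z' + 2 * y') = l * (x' + z' + 2 * y') := by rw [hl]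
  have px := sq_nonneg x
  have px' := sq_nonneg x'
  have pxs := sq_nonneg (x' + 1 / 2)
  have pz := sq_nonneg z
  have pz' := sq_nonneg z'
  have pzs := sq_nonneg (z' + 1 / 2)
  rcases cx with ⟨⟨x1, x2, x3, x4, x5⟩, ex⟩ | ⟨⟨x1, x2, x3, x4⟩, ex⟩ | ⟨⟨x1, x2, x3, x4⟩, ex⟩ <;>
  rcases cy with ⟨⟨y1, y2, y3, y4, y5⟩, ey⟩ | ⟨⟨y1, y2, y3, y4⟩, ey⟩ | ⟨⟨y1, y2, y3, y4⟩, ey⟩ <;>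
  rcases cz with ⟨⟨z1, z2, z3, z4, z5⟩, ez⟩ | ⟨⟨z1, z2, z3, z4⟩, ez⟩ | ⟨⟨z1, z2, z3, z4⟩, ez⟩ <;>
  simp only at x1 x2 x3 x4 y1 y2 y3 y4 z1 z2 z3 z4 <;>
  rw [ex, ey, ez] <;>
  rcases k3 with rfl | rfl | rfl <;>
  rcases l3 with rfl | rfl | rfl <;>
  push_cast at hk hl e1 e2 <;>
  first
  | (exfalso; linarith only [hk, hl, x1, x2, x3, x4, y1, y2, y3, y4, z1, z2, z3, z4])
  | (exfalso; linarith)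
  | linarith

lemma height_nonneg {q : ℝ × ℝ} (h : q ∈ block) : 0 ≤ height q := by
  rcases cases_block h with ⟨-, e⟩ | ⟨⟨h1, -⟩, e⟩ | ⟨⟨h1, -⟩, e⟩ <;> rw [e]
  · positivity
  · nlinarith [sq_nonneg q.1, sq_nonneg q.2]
  · nlinarith [sq_nonneg q.1, sq_nonneg (q.2 + 1 / 2)]

lemma height_lt {q : ℝ × ℝ} (h : q ∈ block) : height q < 1500 := by
  obtain ⟨b1, b2, b3, b4⟩ := block_bounds h
  rcases cases_block h with ⟨-, e⟩ | ⟨⟨h1, h2, h3, h4⟩, e⟩ | ⟨⟨h1, h2, h3, h4⟩, e⟩ <;> rw [e] <;>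
    nlinarith

lemma measurable_height : Measurable height := by
  unfold height
  refine Measurable.ite (measurableSet_lt (by fun_prop) (by fun_prop)) (by fun_prop)
    (Measurable.ite (measurableSet_le (by fun_prop) (by fun_prop)) (by fun_prop) (by fun_prop))

lemma measurableSet_block : MeasurableSet block := by
  unfold block lowPart highPart shiftedHighPart
  measurability

/-- The open trapezoid over the interval `(a, b)` between two affine functions. -/
def trapezoid (a b c c' d d' : ℝ) : Set (ℝ × ℝ) :=
  regionBetween (fun p => c + c' * p) (fun p => d + d' * p) (Ioo a b)

lemma mem_trapezoid {a b c c' d d' : ℝ} {q : ℝ × ℝ} :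
    q ∈ trapezoid a b c c' d d' ↔
      (a < q.1 ∧ q.1 < b) ∧ c + c' * q.1 < q.2 ∧ q.2 < d + d' * q.1 := Iff.rfl

lemma measurableSet_trapezoid (a b c c' d d' : ℝ) : MeasurableSet (trapezoid a b c c' d d') :=
  measurableSet_regionBetween (by fun_prop) (by fun_prop) measurableSet_Ioo

lemma volume_trapezoid {a b c c' d d' : ℝ} (hab : a ≤ b)
    (h : ∀ p ∈ Ioo a b, c + c' * p ≤ d + d' * p) :
    volume (trapezoid a b c c' d d') =
      ENNReal.ofReal ((b - a) * (d - c + (d' - c') * (a + b) / 2)) := by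
  have hint : ∀ u v : ℝ, IntegrableOn (fun p : ℝ => u + v * p) (Ioo a b) := fun u v =>
    ((by fun_prop : Continuous fun p : ℝ => u + v * p).integrableOn_Icc).mono_set Ioo_subset_Icc_self
  rw [trapezoid, Measure.volume_eq_prod,
    volume_regionBetween_eq_integral (hint _ _) (hint _ _) measurableSet_Ioo h,
    ← integral_Ioc_eq_integral_Ioo, ← intervalIntegral.integral_of_le hab]
  congr 1
  have : ∀ p : ℝ, ((fun p => d + d' * p) - fun p => c + c' * p) p
      = (d - c) + (d' - c') * p := fun p => by simp only [Pi.sub_apply]; ring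
  simp_rw [this]
  rw [intervalIntegral.integral_add (by simp) (by apply Continuous.intervalIntegrable; fun_prop),
    intervalIntegral.integral_const, intervalIntegral.integral_const_mul, integral_id, smul_eq_mul]
  ring

lemma le_volume_block : ENNReal.ofReal (7 / 24) ≤ volume block := by
  have hsub : trapezoid 0 (3 / 10) (3 / 8) (-3 / 4) (1 / 2) (1 / 2) ∪
      (trapezoid (3 / 10) (119 / 240) 0 (1 / 2) (1 / 2) (1 / 2) ∪
      (trapezoid (1 / 2) (3 / 5) (1 / 4) (1 / 2) (1 / 2) (1 / 2) ∪
      (trapezoid (3 / 5) (4 / 5) (1 / 4) (1 / 2) (5 / 4) (-3 / 4) ∪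
      (trapezoid (1 / 2) (3 / 5) (-1 / 4) (1 / 2) 0 (1 / 2) ∪
      trapezoid (3 / 5) (4 / 5) (-1 / 4) (1 / 2) (3 / 4) (-3 / 4))))) ⊆ block := by
    rintro q (h | h | h | h | h | h) <;> obtain ⟨⟨h1, h2⟩, h3, h4⟩ := mem_trapezoid.1 h
    · refine Or.inl (Or.inl ⟨?_, ?_, ?_, ?_, ?_⟩) <;> linarith
    · refine Or.inl (Or.inl ⟨?_, ?_, ?_, ?_, ?_⟩) <;> linarith
    · refine Or.inl (Or.inr ⟨?_, ?_, ?_, ?_⟩) <;> linarith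
    · refine Or.inl (Or.inr ⟨?_, ?_, ?_, ?_⟩) <;> linarith
    · refine Or.inr ⟨?_, ?_, ?_, ?_⟩ <;> linarith
    · refine Or.inr ⟨?_, ?_, ?_, ?_⟩ <;> linarith
  refine le_trans (le_of_eq ?_) (measure_mono hsub)
  have M := measurableSet_trapezoid
  rw [measure_union _ (by measurability), measure_union _ (by measurability),
    measure_union _ (by measurability), measure_union _ (by measurability),
    measure_union _ (by measurability)]
  · rw [volume_trapezoid (by norm_num) (fun p hp => by linarith [hp.1, hp.2]),
      volume_trapezoid (by norm_num) (fun p hp => by linarith [hp.1, hp.2]),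
      volume_trapezoid (by norm_num) (fun p hp => by linarith [hp.1, hp.2]),
      volume_trapezoid (by norm_num) (fun p hp => by linarith [hp.1, hp.2]),
      volume_trapezoid (by norm_num) (fun p hp => by linarith [hp.1, hp.2]),
      volume_trapezoid (by norm_num) (fun p hp => by linarith [hp.1, hp.2])]
    rw [← ENNReal.ofReal_add, ← ENNReal.ofReal_add, ← ENNReal.ofReal_add, ← ENNReal.ofReal_add,
      ← ENNReal.ofReal_add] <;> norm_num
  all_goals
    simp only [disjoint_left, mem_union, mem_trapezoid]
    intro q h h'
    obtain ⟨⟨h1, h2⟩, h3, h4⟩ := h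
    grind

lemma exists_shell_measure_ge {α : Type*} [MeasurableSpace α] (μ : Measure α) {T : Set α}
    (g : α → ℝ) {w : ℝ} (hw : 0 < w) {N : ℕ} (hN : N ≠ 0)
    (h0 : ∀ q ∈ T, 0 ≤ g q) (h1 : ∀ q ∈ T, g q < N * w) :
    ∃ a : ℝ, μ T / N ≤ μ (T ∩ g ⁻¹' Ico a (a + w)) := by
  by_contra! hlt
  have hcover : T ⊆ ⋃ j ∈ Finset.range N, T ∩ g ⁻¹' Ico (j * w) (j * w + w) := by
    intro q hq
    have hnn : 0 ≤ g q / w := div_nonneg (h0 q hq) hw.le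
    simp only [mem_iUnion, Finset.mem_range]
    refine ⟨⌊g q / w⌋₊, (Nat.floor_lt hnn).2 ((div_lt_iff₀ hw).2 (h1 q hq)), hq, ?_, ?_⟩
    · exact (le_div_iff₀ hw).1 (Nat.floor_le hnn)
    · have := (div_lt_iff₀ hw).1 (Nat.lt_floor_add_one (g q / w))
      linarith
  have hsum : ∑ j ∈ Finset.range N, μ (T ∩ g ⁻¹' Ico (j * w) (j * w + w)) <
      ∑ _j ∈ Finset.range N, μ T / N :=
    ENNReal.sum_lt_sum_of_nonempty (by simpa using hN) fun j _ => hlt _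
  have hconst : ∑ _j ∈ Finset.range N, μ T / N ≤ μ T := by
    simpa using ENNReal.mul_div_le
  exact absurd ((measure_mono hcover).trans (measure_biUnion_finset_le _ _))
    (not_le.2 (hsum.trans_le hconst))

lemma measurePreserving_pairing {ι κ : Type*} [Fintype ι] [Fintype κ] (e : κ ⊕ κ ≃ ι) :
    MeasurePreserving (fun (x : ι → ℝ) (i : κ) => (x (e (Sum.inl i)), x (e (Sum.inr i)))) := by
  have h1 := (volume_measurePreserving_piCongrLeft (fun _ : ι => ℝ) e).symm
  have h2 := volume_measurePreserving_sumPiEquivProdPi (fun _ : κ ⊕ κ => ℝ)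
  have h3 := (volume_measurePreserving_arrowProdEquivProdArrow ℝ ℝ κ).symm
  exact (h3.comp h2).comp h1

/-- Points of `block ^ κ` of total height in `[a, a + w)`. -/
def shell (κ : Type*) [Fintype κ] (a w : ℝ) : Set (κ → ℝ × ℝ) :=
  univ.pi (fun _ => block) ∩ (fun q => ∑ i, height (q i)) ⁻¹' Ico a (a + w)

lemma measurableSet_shell (κ : Type*) [Fintype κ] (a w : ℝ) : MeasurableSet (shell κ a w) := by
  refine (MeasurableSet.univ_pi fun _ => measurableSet_block).inter
    (measurableSet_preimage ?_ measurableSet_Ico)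
  exact Finset.measurable_sum _ fun i _ => measurable_height.comp (measurable_pi_apply i)

lemma sq_sub_lt_of_mem_shell {κ : Type*} [Fintype κ] {a w : ℝ} {x y z : κ → ℝ × ℝ}
    (hx : x ∈ shell κ a w) (hy : y ∈ shell κ a w) (hz : z ∈ shell κ a w)
    (h : ∀ i, (∃ k : ℤ, (x i).1 + (z i).1 - 2 * (y i).1 = k) ∧
      ∃ l : ℤ, (x i).2 + (z i).2 - 2 * (y i).2 = l) (i : κ) :
    ((x i).1 - (z i).1) ^ 2 + ((x i).2 - (z i).2) ^ 2 < 4 * w := by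
  have gain : ∀ i, (((x i).1 - (z i).1) ^ 2 + ((x i).2 - (z i).2) ^ 2) / 2 ≤
      height (x i) + height (z i) - 2 * height (y i) := fun i => by
    obtain ⟨⟨k, hk⟩, l, hl⟩ := h i
    exact height_gain (hx.1 i trivial) (hy.1 i trivial) (hz.1 i trivial) hk hl
  have hle := Finset.single_le_sum
    (f := fun i => height (x i) + height (z i) - 2 * height (y i))
    (fun j _ => le_trans (by positivity) (gain j)) (Finset.mem_univ i)
  have hs : ∑ i, (height (x i) + height (z i) - 2 * height (y i)) =
      ∑ i, height (x i) + ∑ i, height (z i) - 2 * ∑ i, height (y i) := by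
    rw [Finset.sum_sub_distrib, Finset.sum_add_distrib, Finset.mul_sum]
  have hgx : ∑ i, height (x i) < a + w := hx.2.2
  have hgz : ∑ i, height (z i) < a + w := hz.2.2
  have hgy : a ≤ ∑ i, height (y i) := hy.2.1
  have := gain i
  linarith

lemma exists_le_volume_shell (m : ℕ) (hm : 0 < m) {δ : ℝ} (hδ : 0 < δ) (hδ1 : δ < 1) :
    ∃ a : ℝ, ENNReal.ofReal (δ ^ 2 / (6001 * m) * (7 / 24) ^ m) ≤
      volume (shell (Fin m) a (δ ^ 2 / 4)) := by
  have hm' : (1 : ℝ) ≤ m := by exact_mod_cast hm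
  have hδ2 : δ ^ 2 ≤ 1 := by nlinarith
  set N : ℕ := ⌈6000 * m / δ ^ 2⌉₊ with hNdef
  have hNpos : 0 < N := Nat.ceil_pos.2 (by positivity)
  have hNge : 6000 * m / δ ^ 2 ≤ N := Nat.le_ceil _
  have hNle : (N : ℝ) ≤ 6001 * m / δ ^ 2 := by
    have h1 : (N : ℝ) < 6000 * m / δ ^ 2 + 1 := Nat.ceil_lt_add_one (by positivity)
    have h2 : 1 ≤ m / δ ^ 2 := (one_le_div (by positivity)).2 (hδ2.trans hm')
    have h3 : 6001 * m / δ ^ 2 = 6000 * m / δ ^ 2 + m / δ ^ 2 := by ring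
    linarith
  obtain ⟨a, ha⟩ := exists_shell_measure_ge volume (T := univ.pi fun _ : Fin m => block)
    (fun q => ∑ i, height (q i)) (w := δ ^ 2 / 4) (by positivity) hNpos.ne'
    (fun q hq => Finset.sum_nonneg fun i _ => height_nonneg (hq i trivial))
    (fun q hq => by
      have : Nonempty (Fin m) := ⟨⟨0, hm⟩⟩
      have h1 : ∑ i, height (q i) < ∑ _i : Fin m, (1500 : ℝ) :=
        Finset.sum_lt_sum_of_nonempty Finset.univ_nonempty fun i _ => height_lt (hq i trivial)
      have h2 := (div_le_iff₀ (by positivity)).1 hNge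
      simp only [Finset.sum_const, Finset.card_univ, Fintype.card_fin, nsmul_eq_mul] at h1
      linarith)
  refine ⟨a, le_trans ?_ ha⟩
  have hvol : ENNReal.ofReal ((7 / 24) ^ m) ≤ volume (univ.pi fun _ : Fin m => block) := by
    rw [volume_pi_pi, Finset.prod_const, Finset.card_univ, Fintype.card_fin,
      ENNReal.ofReal_pow (by norm_num)]
    gcongr
    exact le_volume_block
  refine le_trans ?_ (ENNReal.div_le_div_right hvol _)
  rw [← ENNReal.ofReal_natCast, ← ENNReal.ofReal_div_of_pos (by exact_mod_cast hNpos)]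
  apply ENNReal.ofReal_le_ofReal
  rw [div_eq_mul_inv _ (N : ℝ), mul_comm]
  gcongr
  rw [← inv_div]
  gcongr

theorem stmt_18 (δ : ℝ) (hδ : 0 < δ) (hδ1 : δ < 1) (n : ℕ) (hn : 0 < n) (hne : Even n) :
    ∃ S : Set (Fin n → ℝ),
      S ⊆ univ.pi (fun _ => Ico (0:ℝ) 1) ∧ MeasurableSet S ∧
      ENNReal.ofReal ((10:ℝ)⁻¹^5 * δ^2 * ((n:ℝ)^3)⁻¹ * (7/24:ℝ)^(n/2)) ≤ volume S ∧
      ∀ x ∈ S, ∀ y ∈ S, ∀ z ∈ S,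
        (∀ i, ∃ k : ℤ, x i + z i - 2 * y i = k) → ∀ i, |x i - z i| < δ := by
  obtain ⟨m, rfl⟩ := hne
  have hm : 0 < m := by omega
  have hm' : (1 : ℝ) ≤ m := by exact_mod_cast hm
  have hP := measurePreserving_pairing (finSumFinEquiv (m := m) (n := m))
  obtain ⟨a, ha⟩ := exists_le_volume_shell m hm hδ hδ1
  refine ⟨_ ⁻¹' shell (Fin m) a (δ ^ 2 / 4), ?_, hP.measurable (measurableSet_shell _ _ _), ?_, ?_⟩
  · intro x hx i _
    obtain ⟨j | j, rfl⟩ := finSumFinEquiv.surjective i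
    · obtain ⟨h1, h2, -, -⟩ := block_bounds (hx.1 j trivial)
      exact ⟨h1, h2⟩
    · obtain ⟨-, -, h1, h2⟩ := block_bounds (hx.1 j trivial)
      exact ⟨h1, h2⟩
  · rw [hP.measure_preimage (measurableSet_shell _ _ _).nullMeasurableSet]
    refine le_trans (ENNReal.ofReal_le_ofReal ?_) ha
    have hhalf : (m + m) / 2 = m := by omega
    rw [hhalf]
    gcongr
    push_cast
    rw [mul_right_comm, mul_comm, div_eq_mul_inv]
    gcongr
    rw [inv_pow, ← mul_inv]
    gcongr
    · norm_num
    · nlinarith [le_self_pow₀ hm' three_ne_zero]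
  · intro x hx y hy z hz h i
    have key := sq_sub_lt_of_mem_shell hx hy hz fun i => ⟨h _, h _⟩
    refine abs_lt_of_sq_lt_sq ?_ hδ.le
    obtain ⟨j | j, rfl⟩ := finSumFinEquiv.surjective i
    · have := key j
      simp only at this
      nlinarith [sq_nonneg (x (finSumFinEquiv (Sum.inr j)) - z (finSumFinEquiv (Sum.inr j)))]
    · have := key j
      simp only at this
      nlinarith [sq_nonneg (x (finSumFinEquiv (Sum.inl j)) - z (finSumFinEquiv (Sum.inl j)))]
end
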